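/- Consider the hybrid data-sharing and compression problem with L single-antenna BSs and K single-antenna users: channels h_k ∈ ℂ^L with every component h_k(l) ≠ 0, weights α_k > 0, noise variance σ² > 0, SNR gap Γ_m > 0, quantizer gap Γ_q > 0, per-BS powers P_l > 0, per-BS backhaul capacities C_l > 0, and fixed positive rate estimates R̂_k > 0. The variables are beamformers w^c_k, w^d_k ∈ ℂ^L for each user k (with w_k = w^c_k + w^d_k) and quantization noise levels q ∈ ℝ^L with q_l > 0; a point is feasible if for every BS l: Σ_k |w_k(l)|² + q_l ≤ P_l and Σ_k 1{w^d_k(l) ≠ 0}·R̂_k + log(1 + Γ_q Σ_k |w^c_k(l)|² / q_l) ≤ C_l. The objective is Σ_k α_k log(1 + SINR_k/Γ_m) with SINR_k = |h_kᴴ w_k|² / (Σ_{j≠k} |h_kᴴ w_j|² + σ² + Σ_l q_l |h_k(l)|²). Then every feasible point that globally maximizes the objective satisfies, for every BS l and every user k, w^c_k(l) = 0 or w^d_k(l) = 0 (or both). -/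

import Mathlib

open Matrix

/-!
Suppose user `k` is both data-shared to and compressed for BS `l`. Moving its whole coefficient
`wᶜ k l + wᵈ k l` to the data-shared part keeps every combined beamformer and costs no additional
data-sharing backhaul, while the compressed power at `l` strictly decreases. The quantization
noise `q l` can therefore be lowered without raising the compression rate. If some user receives a
signal, the lower noise already improves the objective. If no user does, lowering `q l` frees power
at `l`, which is spent on perturbing the data-shared coefficient of `k`; this gives `k` a positive
SINR at no backhaul cost.
-/

theorem exists_lt_div_le_div {𝕜 : Type*} [Field 𝕜] [LinearOrder 𝕜] [IsStrictOrderedRing 𝕜]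
    {a b q : 𝕜} (ha : 0 ≤ a) (hab : a < b) (hq : 0 < q) :
    ∃ x, 0 < x ∧ x < q ∧ a / x ≤ b / q := by
  have hb : 0 < b := ha.trans_lt hab
  have hlt : a / b * q < q := mul_lt_of_lt_one_left hq ((div_lt_one hb).2 hab)
  obtain ⟨x, hx, hxq⟩ := exists_between hlt
  have hx0 : 0 < x := lt_of_le_of_lt (by positivity) hx
  refine ⟨x, hx0, hxq, (div_le_div_iff₀ hx0 hq).2 ?_⟩
  rw [div_mul_eq_mul_div, div_lt_iff₀ hb] at hx
  linarith

theorem exists_ne_norm_sq_lt_add {𝕜 : Type*} [NontriviallyNormedField 𝕜] (w : 𝕜) {ε : ℝ}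
    (hε : 0 < ε) : ∃ z, z ≠ w ∧ ‖z‖ ^ 2 < ‖w‖ ^ 2 + ε := by
  have hnear : ∀ᶠ z in nhdsWithin w {w}ᶜ, ‖z‖ ^ 2 < ‖w‖ ^ 2 + ε :=
    nhdsWithin_le_nhds <|
      (continuous_norm.pow 2).continuousAt.eventually_lt continuousAt_const (by simpa using hε)
  obtain ⟨z, hz, hzw⟩ := (hnear.and self_mem_nhdsWithin).exists
  exact ⟨z, hzw, hz⟩

theorem strictMonoOn_mul_log_one_add_div {α Γ : ℝ} (hα : 0 < α) (hΓ : 0 < Γ) :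
    StrictMonoOn (fun x => α * Real.log (1 + x / Γ)) (Set.Ici 0) := by
  intro x (hx : 0 ≤ x) y _ hxy
  have hlog : Real.log (1 + x / Γ) < Real.log (1 + y / Γ) :=
    Real.log_lt_log (by positivity) (by gcongr)
  exact mul_lt_mul_of_pos_left hlog hα

theorem monotoneOn_log_one_add_mul {Γ : ℝ} (hΓ : 0 ≤ Γ) :
    MonotoneOn (fun x => Real.log (1 + Γ * x)) (Set.Ici 0) := by
  intro x (hx : 0 ≤ x) y _ hxy
  exact Real.log_le_log (by positivity) (by gcongr)

section SINR

variable {ι κ : Type*} [Fintype ι] [Fintype κ] [DecidableEq κ]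

/-- Power of the interference, the receiver noise and the quantization noise at user `k`: the
denominator of its SINR. -/
noncomputable def interferencePlusNoise (h : κ → ι → ℂ) (σ2 : ℝ) (w : κ → ι → ℂ) (q : ι → ℝ)
    (k : κ) : ℝ :=
  (∑ j ∈ Finset.univ.erase k, ‖star (h k) ⬝ᵥ w j‖ ^ 2) + σ2 + ∑ l, q l * ‖h k l‖ ^ 2

/-- Signal-to-interference-plus-noise ratio of user `k`. It depends on the compressed and
data-shared beamformers only through their sum `w`. -/
noncomputable def sinr (h : κ → ι → ℂ) (σ2 : ℝ) (w : κ → ι → ℂ) (q : ι → ℝ) (k : κ) : ℝ :=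
  ‖star (h k) ⬝ᵥ w k‖ ^ 2 / interferencePlusNoise h σ2 w q k

/-- Sum over the users of a utility `U k` of the SINR of user `k`; the weighted sum rate is the
case `U k x = α k * log (1 + x / Γm)`. -/
noncomputable def sumUtility (U : κ → ℝ → ℝ) (h : κ → ι → ℂ) (σ2 : ℝ) (w : κ → ι → ℂ)
    (q : ι → ℝ) : ℝ :=
  ∑ k, U k (sinr h σ2 w q k)

variable {U : κ → ℝ → ℝ} {h w w' : κ → ι → ℂ} {σ2 : ℝ} {q q' : ι → ℝ} {k : κ} {l : ι}

theorem interferencePlusNoise_pos (hσ : 0 ≤ σ2) (hq : ∀ m, 0 < q m) (hl : h k l ≠ 0) :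
    0 < interferencePlusNoise h σ2 w q k := by
  have hinterference : 0 ≤ ∑ j ∈ Finset.univ.erase k, ‖star (h k) ⬝ᵥ w j‖ ^ 2 := by positivity
  have hquantization : 0 < ∑ m, q m * ‖h k m‖ ^ 2 :=
    Finset.sum_pos' (fun m _ => mul_nonneg (hq m).le (sq_nonneg _))
      ⟨l, Finset.mem_univ l, mul_pos (hq l) (by positivity)⟩
  exact add_pos_of_nonneg_of_pos (add_nonneg hinterference hσ) hquantization

theorem interferencePlusNoise_lt (hle : q' ≤ q) (hlt : q' l < q l) (hl : h k l ≠ 0) :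
    interferencePlusNoise h σ2 w q' k < interferencePlusNoise h σ2 w q k := by
  refine add_lt_add_right (Finset.sum_lt_sum (fun m _ => ?_) ⟨l, Finset.mem_univ l, ?_⟩) _
  · exact mul_le_mul_of_nonneg_right (hle m) (sq_nonneg _)
  · exact mul_lt_mul_of_pos_right hlt (by positivity)

theorem sinr_nonneg (hσ : 0 ≤ σ2) (hq : ∀ m, 0 < q m) (hl : h k l ≠ 0) :
    0 ≤ sinr h σ2 w q k :=
  div_nonneg (sq_nonneg _) (interferencePlusNoise_pos hσ hq hl).le

theorem sinr_pos (hσ : 0 ≤ σ2) (hq : ∀ m, 0 < q m) (hl : h k l ≠ 0)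
    (hsignal : star (h k) ⬝ᵥ w k ≠ 0) : 0 < sinr h σ2 w q k :=
  div_pos (by positivity) (interferencePlusNoise_pos hσ hq hl)

theorem sinr_eq_zero (hsignal : star (h k) ⬝ᵥ w k = 0) : sinr h σ2 w q k = 0 := by
  simp [sinr, hsignal]

theorem sinr_le_sinr (hσ : 0 ≤ σ2) (hq' : ∀ m, 0 < q' m) (hle : q' ≤ q) (hlt : q' l < q l)
    (hl : h k l ≠ 0) : sinr h σ2 w q k ≤ sinr h σ2 w q' k :=
  div_le_div_of_nonneg_left (sq_nonneg _) (interferencePlusNoise_pos hσ hq' hl)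
    (interferencePlusNoise_lt hle hlt hl).le

theorem sinr_lt_sinr (hσ : 0 ≤ σ2) (hq' : ∀ m, 0 < q' m) (hle : q' ≤ q) (hlt : q' l < q l)
    (hl : h k l ≠ 0) (hsignal : star (h k) ⬝ᵥ w k ≠ 0) :
    sinr h σ2 w q k < sinr h σ2 w q' k :=
  div_lt_div_of_pos_left (by positivity) (interferencePlusNoise_pos hσ hq' hl)
    (interferencePlusNoise_lt hle hlt hl)

theorem sumUtility_lt_sumUtility (hU : ∀ j, StrictMonoOn (U j) (Set.Ici 0))
    (hnonneg : ∀ j, 0 ≤ sinr h σ2 w q j) (hle : ∀ j, sinr h σ2 w q j ≤ sinr h σ2 w' q' j)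
    (hlt : sinr h σ2 w q k < sinr h σ2 w' q' k) :
    sumUtility U h σ2 w q < sumUtility U h σ2 w' q' :=
  Finset.sum_lt_sum
    (fun j _ => (hU j).monotoneOn (hnonneg j) ((hnonneg j).trans (hle j)) (hle j))
    ⟨k, Finset.mem_univ k, hU k (hnonneg k) ((hnonneg k).trans (hle k)) hlt⟩

theorem sumUtility_lt_of_quantization_lt (hU : ∀ j, StrictMonoOn (U j) (Set.Ici 0)) (hσ : 0 ≤ σ2)
    (hl : ∀ j, h j l ≠ 0) (hq' : ∀ m, 0 < q' m) (hle : q' ≤ q) (hlt : q' l < q l)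
    (hsignal : star (h k) ⬝ᵥ w k ≠ 0) :
    sumUtility U h σ2 w q < sumUtility U h σ2 w q' :=
  sumUtility_lt_sumUtility hU (fun j => sinr_nonneg hσ (fun m => (hq' m).trans_le (hle m)) (hl j))
    (fun j => sinr_le_sinr hσ hq' hle hlt (hl j)) (sinr_lt_sinr hσ hq' hle hlt (hl k) hsignal)

theorem sumUtility_lt_of_signal_eq_zero (hU : ∀ j, StrictMonoOn (U j) (Set.Ici 0)) (hσ : 0 ≤ σ2)
    (hl : ∀ j, h j l ≠ 0) (hq' : ∀ m, 0 < q' m) (hzero : ∀ j, star (h j) ⬝ᵥ w j = 0)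
    (hsignal : star (h k) ⬝ᵥ w' k ≠ 0) :
    sumUtility U h σ2 w q < sumUtility U h σ2 w' q' := by
  have hsinr (j : κ) : sinr h σ2 w q j = 0 := sinr_eq_zero (hzero j)
  refine sumUtility_lt_sumUtility (k := k) hU (fun j => (hsinr j).ge) (fun j => ?_) ?_
  · exact (hsinr j).trans_le (sinr_nonneg hσ hq' (hl j))
  · exact (hsinr k).trans_lt (sinr_pos hσ hq' (hl k) hsignal)

end SINR

section SetCoeff

variable {ι κ R : Type*} [DecidableEq ι] [DecidableEq κ]

/-- The beamformers `w` with the coefficient of user `k` at BS `l` replaced by `z`. -/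
def setCoeff (w : κ → ι → R) (k : κ) (l : ι) (z : R) : κ → ι → R :=
  Function.update w k (Function.update (w k) l z)

theorem setCoeff_eq_self (w : κ → ι → R) (k : κ) (l : ι) : setCoeff w k l (w k l) = w := by
  simp [setCoeff]

theorem setCoeff_add_setCoeff [Add R] (v w : κ → ι → R) (k : κ) (l : ι) (y z : R) :
    setCoeff v k l y + setCoeff w k l z = setCoeff (v + w) k l (y + z) := by
  simp only [setCoeff, Pi.add_apply, Function.update_add]

theorem setCoeff_col_self (w : κ → ι → R) (k : κ) (l : ι) (z : R) :
    (fun j => setCoeff w k l z j l) = Function.update (fun j => w j l) k z := by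
  ext j
  rcases eq_or_ne j k with rfl | hjk <;> simp [setCoeff, *]

theorem setCoeff_col_of_ne (w : κ → ι → R) (k : κ) {l m : ι} (hml : m ≠ l) (z : R) :
    (fun j => setCoeff w k l z j m) = fun j => w j m := by
  ext j
  rcases eq_or_ne j k with rfl | hjk <;> simp [setCoeff, *]

theorem dotProduct_setCoeff [Fintype ι] [NonUnitalNonAssocRing R] (v : ι → R) (w : κ → ι → R)
    (k : κ) (l : ι) (z : R) : v ⬝ᵥ setCoeff w k l z k = v ⬝ᵥ w k + v l * (z - w k l) := by
  have hupdate : setCoeff w k l z k = w k + Pi.single l (z - w k l) := by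
    ext m
    rcases eq_or_ne m l with rfl | hml <;> simp [setCoeff, *]
  rw [hupdate, dotProduct_add, dotProduct_single]

end SetCoeff

section Feasibility

variable {ι κ : Type*} [Fintype κ]

/-- The constraints at a single BS with power budget `P` and backhaul capacity `C`, in terms of
the compressed coefficients `c`, the data-shared coefficients `d` and the quantization noise `q`
there. The compression rate is a function `ρ` of the signal-to-quantization-noise ratio; in the
paper `ρ x = log (1 + Γq * x)`. -/
def IsFeasibleAt (ρ : ℝ → ℝ) (P C : ℝ) (Rhat : κ → ℝ) (c d : κ → ℂ) (q : ℝ) : Prop :=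
  0 < q ∧ (∑ k, ‖c k + d k‖ ^ 2) + q ≤ P ∧
    (∑ k, if d k ≠ 0 then Rhat k else 0) + ρ ((∑ k, ‖c k‖ ^ 2) / q) ≤ C

/-- Feasibility of compressed beamformers `wc`, data-shared beamformers `wd` and quantization
noise levels `q`. No constraint couples different BSs. -/
def IsFeasible (ρ : ι → ℝ → ℝ) (P C : ι → ℝ) (Rhat : κ → ℝ) (wc wd : κ → ι → ℂ) (q : ι → ℝ) :
    Prop :=
  ∀ l, IsFeasibleAt (ρ l) (P l) (C l) Rhat (fun k => wc k l) (fun k => wd k l) (q l)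

variable [DecidableEq κ]

theorem sum_norm_sq_update_add {E : Type*} [Norm E] (v : κ → E) (k : κ) (z : E) :
    ∑ j, ‖Function.update v k z j‖ ^ 2 + ‖v k‖ ^ 2 = ∑ j, ‖v j‖ ^ 2 + ‖z‖ ^ 2 := by
  have hrest : ∑ j ∈ Finset.univ.erase k, ‖Function.update v k z j‖ ^ 2 =
      ∑ j ∈ Finset.univ.erase k, ‖v j‖ ^ 2 :=
    Finset.sum_congr rfl fun j hj => by rw [Function.update_of_ne (Finset.ne_of_mem_erase hj)]
  rw [← Finset.add_sum_erase _ _ (Finset.mem_univ k), hrest, Function.update_self,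
    ← Finset.add_sum_erase _ (fun j => ‖v j‖ ^ 2) (Finset.mem_univ k)]
  ring

theorem sum_norm_sq_update_zero_lt {E : Type*} [NormedAddCommGroup E] {v : κ → E} {k : κ}
    (hv : v k ≠ 0) : ∑ j, ‖Function.update v k 0 j‖ ^ 2 < ∑ j, ‖v j‖ ^ 2 := by
  have hpos : 0 < ‖v k‖ ^ 2 := by positivity
  have hsum := sum_norm_sq_update_add v k 0
  rw [norm_zero, zero_pow two_ne_zero, add_zero] at hsum
  linarith

theorem sum_ite_update_ne_zero_le {M : Type*} [Zero M] [DecidableEq M] {Rhat : κ → ℝ}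
    {d : κ → M} {k : κ} (hR : 0 ≤ Rhat k) (hd : d k ≠ 0) (z : M) :
    (∑ j, if Function.update d k z j ≠ 0 then Rhat j else 0) ≤
      ∑ j, if d j ≠ 0 then Rhat j else 0 := by
  refine Finset.sum_le_sum fun j _ => ?_
  rcases eq_or_ne j k with rfl | hjk
  · rw [if_pos hd]
    split_ifs
    exacts [le_rfl, hR]
  · rw [Function.update_of_ne hjk]

theorem IsFeasibleAt.transfer {ρ : ℝ → ℝ} {P C : ℝ} {Rhat : κ → ℝ} {c d : κ → ℂ}
    {q x : ℝ} {k : κ} {z : ℂ} (hf : IsFeasibleAt ρ P C Rhat c d q)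
    (hρ : MonotoneOn ρ (Set.Ici 0)) (hR : 0 ≤ Rhat k) (hd : d k ≠ 0) (hx : 0 < x)
    (hratio : (∑ j, ‖Function.update c k 0 j‖ ^ 2) / x ≤ (∑ j, ‖c j‖ ^ 2) / q)
    (hz : ‖z‖ ^ 2 + x ≤ ‖c k + d k‖ ^ 2 + q) :
    IsFeasibleAt ρ P C Rhat (Function.update c k 0) (Function.update d k z) x := by
  obtain ⟨-, hpower, hbackhaul⟩ := hf
  refine ⟨hx, ?_, ?_⟩
  · have hupdate : Function.update (c + d) k z =
        Function.update c k 0 + Function.update d k z := by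
      rw [← Function.update_add, zero_add]
    have hsum := sum_norm_sq_update_add (c + d) k z
    simp only [hupdate, Pi.add_apply] at hsum
    linarith
  · have hratio_nonneg : 0 ≤ (∑ j, ‖Function.update c k 0 j‖ ^ 2) / x := by positivity
    have hcompression := hρ hratio_nonneg (hratio_nonneg.trans hratio) hratio
    linarith [sum_ite_update_ne_zero_le hR hd z]

variable [DecidableEq ι] {ρ : ι → ℝ → ℝ} {P C : ι → ℝ} {Rhat : κ → ℝ} {wc wd : κ → ι → ℂ}
  {q : ι → ℝ} {k : κ} {l : ι}

theorem IsFeasible.update {x : ℝ} {y z : ℂ} (hf : IsFeasible ρ P C Rhat wc wd q)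
    (hl : IsFeasibleAt (ρ l) (P l) (C l) Rhat (Function.update (fun j => wc j l) k y)
      (Function.update (fun j => wd j l) k z) x) :
    IsFeasible ρ P C Rhat (setCoeff wc k l y) (setCoeff wd k l z) (Function.update q l x) := by
  intro m
  rcases eq_or_ne m l with rfl | hml
  · rwa [setCoeff_col_self, setCoeff_col_self, Function.update_self]
  · rw [setCoeff_col_of_ne _ _ hml, setCoeff_col_of_ne _ _ hml, Function.update_of_ne hml]
    exact hf m

theorem IsFeasible.exists_transfer (hf : IsFeasible ρ P C Rhat wc wd q)
    (hρ : MonotoneOn (ρ l) (Set.Ici 0)) (hR : 0 ≤ Rhat k) (hc : wc k l ≠ 0) (hd : wd k l ≠ 0) :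
    ∃ x < q l, ∀ z : ℂ, ‖z‖ ^ 2 + x ≤ ‖wc k l + wd k l‖ ^ 2 + q l →
      IsFeasible ρ P C Rhat (setCoeff wc k l 0) (setCoeff wd k l z) (Function.update q l x) := by
  obtain ⟨x, hx, hxq, hratio⟩ := exists_lt_div_le_div (by positivity)
    (sum_norm_sq_update_zero_lt (v := fun j => wc j l) hc) (hf l).1
  exact ⟨x, hxq, fun z hz => hf.update ((hf l).transfer hρ hR hd hx hratio hz)⟩

end Feasibility

theorem hybrid_no_simultaneous_sharing_and_compression_general {ι κ : Type*} [Fintype ι]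
    [Fintype κ] [DecidableEq κ] {h : κ → ι → ℂ} {l : ι} (hl : ∀ j, h j l ≠ 0)
    {U : κ → ℝ → ℝ} (hU : ∀ j, StrictMonoOn (U j) (Set.Ici 0)) {σ2 : ℝ} (hσ : 0 ≤ σ2)
    {ρ : ι → ℝ → ℝ} (hρ : MonotoneOn (ρ l) (Set.Ici 0)) {P C : ι → ℝ} {Rhat : κ → ℝ} {k : κ}
    (hR : 0 ≤ Rhat k) {wc wd : κ → ι → ℂ} {q : ι → ℝ} (hf : IsFeasible ρ P C Rhat wc wd q)
    (hopt : ∀ wc' wd' q', IsFeasible ρ P C Rhat wc' wd' q' →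
      sumUtility U h σ2 (wc' + wd') q' ≤ sumUtility U h σ2 (wc + wd) q) :
    wc k l = 0 ∨ wd k l = 0 := by
  classical
  by_contra! hboth
  obtain ⟨x, hxq, htransfer⟩ := hf.exists_transfer hρ hR hboth.1 hboth.2
  have hopt_transfer (z : ℂ) (hz : ‖z‖ ^ 2 + x ≤ ‖wc k l + wd k l‖ ^ 2 + q l) :
      sumUtility U h σ2 (setCoeff (wc + wd) k l z) (Function.update q l x) ≤
        sumUtility U h σ2 (wc + wd) q := by
    simpa only [setCoeff_add_setCoeff, zero_add] using hopt _ _ _ (htransfer z hz)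
  have hq' (m : ι) : 0 < Function.update q l x m :=
    (htransfer (wc k l + wd k l) (by linarith) m).1
  by_cases hzero : ∀ j, star (h j) ⬝ᵥ (wc + wd) j = 0
  · obtain ⟨z, hzw, hz⟩ := exists_ne_norm_sq_lt_add (wc k l + wd k l) (sub_pos.2 hxq)
    have hsignal : star (h k) ⬝ᵥ setCoeff (wc + wd) k l z k ≠ 0 := by
      rw [dotProduct_setCoeff, hzero k, zero_add]
      exact mul_ne_zero (star_ne_zero.2 (hl k)) (sub_ne_zero.2 hzw)
    exact (hopt_transfer z (by linarith)).not_gt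
      (sumUtility_lt_of_signal_eq_zero hU hσ hl hq' hzero hsignal)
  · obtain ⟨j, hsignal⟩ := not_forall.1 hzero
    have hle := hopt_transfer ((wc + wd) k l) (add_le_add_right hxq.le _)
    rw [setCoeff_eq_self] at hle
    exact hle.not_gt (sumUtility_lt_of_quantization_lt hU hσ hl hq'
      (update_le_self_iff.2 hxq.le) (by simpa using hxq) hsignal)

/-- Proposition 1 of the paper: in the hybrid data-sharing and compression problem
(with the user rates in the backhaul constraint fixed at `R̂`), every feasible point
that globally maximizes the weighted sum rate objective has, for every BS `l` and
every user `k`, either a zero compression beamforming coefficient `wᶜ k l = 0` or a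
zero data-sharing beamforming coefficient `wᵈ k l = 0` (or both). -/
theorem hybrid_no_simultaneous_sharing_and_compression {L K : ℕ}
    (h : Fin K → Fin L → ℂ) (hne : ∀ k l, h k l ≠ 0)
    (α : Fin K → ℝ) (hα : ∀ k, 0 < α k)
    (σ2 Γm Γq : ℝ) (hσ : 0 < σ2) (hΓm : 0 < Γm) (hΓq : 0 < Γq)
    (P : Fin L → ℝ) (hP : ∀ l, 0 < P l)
    (C : Fin L → ℝ) (hC : ∀ l, 0 < C l)
    (Rhat : Fin K → ℝ) (hR : ∀ k, 0 < Rhat k) :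
    let feasible : (Fin K → Fin L → ℂ) → (Fin K → Fin L → ℂ) → (Fin L → ℝ) → Prop :=
      fun wc wd q =>
        (∀ l, 0 < q l) ∧
        (∀ l, (∑ k, ‖wc k l + wd k l‖ ^ 2) + q l ≤ P l) ∧
        (∀ l, (∑ k, if wd k l ≠ 0 then Rhat k else 0) +
          Real.log (1 + Γq * (∑ k, ‖wc k l‖ ^ 2) / q l) ≤ C l)
    let obj : (Fin K → Fin L → ℂ) → (Fin K → Fin L → ℂ) → (Fin L → ℝ) → ℝ :=
      fun wc wd q => ∑ k, α k * Real.log (1 +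
        (‖star (h k) ⬝ᵥ (fun l => wc k l + wd k l)‖ ^ 2 /
          ((∑ j ∈ Finset.univ.erase k,
              ‖star (h k) ⬝ᵥ (fun l => wc j l + wd j l)‖ ^ 2) +
            σ2 + ∑ l, q l * ‖h k l‖ ^ 2)) / Γm)
    ∀ (wc wd : Fin K → Fin L → ℂ) (q : Fin L → ℝ),
      feasible wc wd q →
      (∀ (wc' wd' : Fin K → Fin L → ℂ) (q' : Fin L → ℝ),
        feasible wc' wd' q' → obj wc' wd' q' ≤ obj wc wd q) →
      ∀ (l : Fin L) (k : Fin K), wc k l = 0 ∨ wd k l = 0 := by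
  intro feasible obj wc wd q hf hopt l k
  have hfeasible (wc wd : Fin K → Fin L → ℂ) (q : Fin L → ℝ) : feasible wc wd q ↔
      IsFeasible (fun _ x => Real.log (1 + Γq * x)) P C Rhat wc wd q := by
    simp only [feasible, IsFeasible, IsFeasibleAt, forall_and, mul_div_assoc]
  exact hybrid_no_simultaneous_sharing_and_compression_general (fun j => hne j l)
    (fun j => strictMonoOn_mul_log_one_add_div (hα j) hΓm) hσ.le
    (monotoneOn_log_one_add_mul hΓq.le) (hR k).le ((hfeasible wc wd q).1 hf)
    fun wc' wd' q' hf' => hopt wc' wd' q' ((hfeasible wc' wd' q').2 hf')
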